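/- arXiv:2411.19293 — 5 statements merged into one kernel-verified Lean document; each statement's English description precedes it below -/
import Mathlib

section
/- For all n×n real matrices A and B, the Frobenius norm of the commutator satisfies ‖AB − BA‖_F² ≤ n·(‖A‖_F²·‖B‖_F² − ⟨A,B⟩_F²). -/
open Matrix

/-- Frobenius inner product of two `n × n` real matrices: `⟨A, B⟩_F = tr(Aᵀ B)`. -/
noncomputable def frobIP {n : ℕ} (A B : Matrix (Fin n) (Fin n) ℝ) : ℝ := (Aᵀ * B).trace

/-- Frobenius norm of an `n × n` real matrix. -/
noncomputable def frobNorm {n : ℕ} (A : Matrix (Fin n) (Fin n) ℝ) : ℝ := Real.sqrt (frobIP A A)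

theorem frobIP_eq_sum {n : ℕ} (A B : Matrix (Fin n) (Fin n) ℝ) :
    frobIP A B = ∑ i, ∑ j, A i j * B i j := by
  simp only [frobIP, Matrix.trace, Matrix.diag, Matrix.mul_apply, Matrix.transpose_apply]
  exact Finset.sum_comm

theorem frobIP_self_nonneg {n : ℕ} (A : Matrix (Fin n) (Fin n) ℝ) : 0 ≤ frobIP A A := by
  rw [frobIP_eq_sum]
  exact Finset.sum_nonneg fun i _ => Finset.sum_nonneg fun j _ => mul_self_nonneg _

theorem frobNorm_sq {n : ℕ} (A : Matrix (Fin n) (Fin n) ℝ) : frobNorm A ^ 2 = frobIP A A :=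
  Real.sq_sqrt (frobIP_self_nonneg A)

theorem frobIP_cs {n : ℕ} (P Q : Matrix (Fin n) (Fin n) ℝ) :
    frobIP P Q ^ 2 ≤ frobIP P P * frobIP Q Q := by
  have h := Finset.sum_mul_sq_le_sq_mul_sq (Finset.univ : Finset (Fin n × Fin n))
    (fun p => P p.1 p.2) (fun p => Q p.1 p.2)
  simp only [Fintype.sum_prod_type] at h
  simpa only [frobIP_eq_sum, ← sq] using h

theorem parallelogram_aux {n : ℕ} (X Y : Matrix (Fin n) (Fin n) ℝ) :
    frobIP (X * Y - Y * X) (X * Y - Y * X) + frobIP (Xᵀ * Y + Y * Xᵀ) (Xᵀ * Y + Y * Xᵀ)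
      = ((Xᵀ * X + X * Xᵀ) * (Y * Yᵀ + Yᵀ * Y)).trace := by
  have cyc : ∀ P Q R S : Matrix (Fin n) (Fin n) ℝ,
      (P * (Q * (R * S))).trace = (Q * (R * (S * P))).trace := by
    intro P Q R S
    rw [Matrix.trace_mul_comm]; simp only [Matrix.mul_assoc]
  have tr : ∀ P Q R S : Matrix (Fin n) (Fin n) ℝ,
      (P * (Q * (R * S))).trace = (Sᵀ * (Rᵀ * (Qᵀ * Pᵀ))).trace := by
    intro P Q R S
    rw [← Matrix.trace_transpose]; simp only [Matrix.transpose_mul, Matrix.mul_assoc]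
  simp only [frobIP, Matrix.transpose_sub, Matrix.transpose_add, Matrix.transpose_mul,
    Matrix.transpose_transpose, Matrix.sub_mul, Matrix.mul_sub, Matrix.add_mul, Matrix.mul_add,
    Matrix.trace_add, Matrix.trace_sub, Matrix.mul_assoc]
  have e1 := cyc Yᵀ Xᵀ X Y
  have e2 := cyc Xᵀ Yᵀ Y X
  have e2' := cyc Yᵀ Y X Xᵀ
  have e2'' := cyc Y X Xᵀ Yᵀ
  have e3 := cyc Yᵀ X Xᵀ Y
  have e4 := cyc X Yᵀ Y Xᵀ
  have e4' := cyc Yᵀ Y Xᵀ X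
  have e4'' := cyc Y Xᵀ X Yᵀ
  have f1 := cyc Yᵀ X Y Xᵀ
  have f2 := cyc X Y Xᵀ Yᵀ
  have f3 := cyc Y Xᵀ Yᵀ X
  have f4 := cyc Xᵀ Yᵀ X Y
  have g1 := cyc Yᵀ Xᵀ Y X
  have g2 := cyc Xᵀ Y X Yᵀ
  have g3 := cyc Y X Yᵀ Xᵀ
  have g4 := cyc X Yᵀ Xᵀ Y
  have t := tr Yᵀ X Y Xᵀ
  simp only [Matrix.transpose_transpose] at t
  linarith

theorem cross_aux {n : ℕ} (X Y : Matrix (Fin n) (Fin n) ℝ) :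
    frobIP Y (Xᵀ * Y + Y * Xᵀ) = (Xᵀ * (Y * Yᵀ + Yᵀ * Y)).trace := by
  simp only [frobIP, Matrix.mul_add, Matrix.trace_add]
  congr 1
  · rw [Matrix.trace_mul_comm, Matrix.mul_assoc]
  · rw [← Matrix.mul_assoc, Matrix.trace_mul_comm]

theorem variance_aux {n : ℕ} (d x : Fin n → ℝ) (hd : ∀ i, 0 ≤ d i) :
    (∑ i, d i) * (∑ i, d i * x i ^ 2) - (∑ i, d i * x i) ^ 2
      ≤ (∑ i, d i) ^ 2 / 2 * ∑ i, x i ^ 2 := by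
  rcases isEmpty_or_nonempty (Fin n) with h | h
  · simp
  obtain ⟨a, ha⟩ := Finite.exists_max x
  obtain ⟨b, hb⟩ := Finite.exists_min x
  have hT : 0 ≤ ∑ i, d i := Finset.sum_nonneg fun i _ => hd i
  have h1 : 0 ≤ ∑ i, d i * ((x i - x b) * (x a - x i)) :=
    Finset.sum_nonneg fun i _ => mul_nonneg (hd i)
      (mul_nonneg (sub_nonneg.2 (hb i)) (sub_nonneg.2 (ha i)))
  have h2 : ∑ i, d i * ((x i - x b) * (x a - x i))
      = (x a + x b) * (∑ i, d i * x i) - x a * x b * (∑ i, d i) - ∑ i, d i * x i ^ 2 := by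
    rw [Finset.mul_sum, Finset.mul_sum, ← Finset.sum_sub_distrib, ← Finset.sum_sub_distrib]
    exact Finset.sum_congr rfl fun i _ => by ring
  have h3 : (x a - x b) ^ 2 ≤ 2 * ∑ i, x i ^ 2 := by
    by_cases hab : a = b
    · subst hab
      have : 0 ≤ ∑ i, x i ^ 2 := Finset.sum_nonneg fun i _ => sq_nonneg _
      simpa using this
    · have : ∑ i ∈ {a, b}, x i ^ 2 ≤ ∑ i, x i ^ 2 :=
        Finset.sum_le_sum_of_subset_of_nonneg (Finset.subset_univ _) fun i _ _ => sq_nonneg _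
      rw [Finset.sum_pair hab] at this
      nlinarith [sq_nonneg (x a + x b)]
  rw [h2] at h1
  generalize (∑ i, d i) = T at *
  generalize (∑ i, d i * x i) = s at *
  generalize (∑ i, d i * x i ^ 2) = q at *
  generalize (∑ i, x i ^ 2) = S at *
  have h4 := mul_nonneg hT h1
  have h5 := mul_le_mul_of_nonneg_left h3 (sq_nonneg T)
  nlinarith [sq_nonneg (s - (x a + x b) * T / 2)]

theorem bw_diag {n : ℕ} (X Y : Matrix (Fin n) (Fin n) ℝ) (d : Fin n → ℝ)
    (h : Y * Yᵀ + Yᵀ * Y = Matrix.diagonal d) :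
    frobIP (X * Y - Y * X) (X * Y - Y * X) ≤ 2 * frobIP X X * frobIP Y Y := by
  have hd : ∀ i, 0 ≤ d i := by
    intro i
    have := congrFun (congrFun h i) i
    rw [Matrix.diagonal_apply_eq] at this
    rw [← this]
    simp only [Matrix.add_apply, Matrix.mul_apply, Matrix.transpose_apply]
    exact add_nonneg (Finset.sum_nonneg fun _ _ => mul_self_nonneg _)
      (Finset.sum_nonneg fun _ _ => mul_self_nonneg _)
  have hT : ∑ i, d i = 2 * frobIP Y Y := by
    rw [← Matrix.trace_diagonal, ← h, Matrix.trace_add, Matrix.trace_mul_comm, frobIP]; ring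
  have hp := parallelogram_aux X Y
  have hc := cross_aux X Y
  have hcs := frobIP_cs Y (Xᵀ * Y + Y * Xᵀ)
  rw [h] at hp hc
  have hc' : (Xᵀ * Matrix.diagonal d).trace = ∑ i, d i * X i i := by
    simp [Matrix.trace, Matrix.mul_diagonal, mul_comm]
  have hp' : ((Xᵀ * X + X * Xᵀ) * Matrix.diagonal d).trace
      = ∑ i, ∑ j, (d i + d j) * X i j ^ 2 := by
    simp only [Matrix.trace, Matrix.diag, Matrix.mul_diagonal]
    simp only [Matrix.add_apply, Matrix.mul_apply, Matrix.transpose_apply, add_mul, Finset.sum_add_distrib, Finset.sum_mul]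
    rw [add_comm]
    congr 1
    · exact Finset.sum_congr rfl fun i _ => Finset.sum_congr rfl fun j _ => by ring
    · rw [Finset.sum_comm]
      exact Finset.sum_congr rfl fun i _ => Finset.sum_congr rfl fun j _ => by ring
  have hv := variance_aux d (fun i => X i i) hd
  rw [hc, hc'] at hcs
  rw [hp'] at hp
  have hoff : ∑ i, ∑ j, (d i + d j) * X i j ^ 2
      ≤ (∑ i, d i) * frobIP X X - (∑ i, d i) * (∑ i, X i i ^ 2) + 2 * ∑ i, d i * X i i ^ 2 := by
    have : ∀ i j, (d i + d j) * X i j ^ 2 ≤ (∑ k, d k) * (X i j * X i j)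
        + (if i = j then (2 * (d i * X i i ^ 2) - (∑ k, d k) * X i i ^ 2) else 0) := by
      intro i j
      by_cases hij : i = j
      · subst hij; simp; nlinarith
      · have h2 : ∑ k ∈ {i, j}, d k ≤ ∑ k, d k :=
          Finset.sum_le_sum_of_subset_of_nonneg (Finset.subset_univ _) fun i _ _ => hd i
        rw [Finset.sum_pair hij] at h2
        simp only [hij, if_false]
        nlinarith [sq_nonneg (X i j)]
    refine (Finset.sum_le_sum fun i _ => Finset.sum_le_sum fun j _ => this i j).trans ?_
    simp only [Finset.sum_add_distrib, Finset.sum_ite_eq, Finset.mem_univ, if_true,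
      Finset.sum_sub_distrib, ← Finset.mul_sum, frobIP_eq_sum]
    linarith
  rcases (frobIP_self_nonneg Y).eq_or_lt with h0 | h0
  · have h1 : ∀ i, d i = 0 := by
      intro i
      rw [← h0, mul_zero] at hT
      exact (Finset.sum_eq_zero_iff_of_nonneg fun i _ => hd i).1 hT i (Finset.mem_univ i)
    have h2 := frobIP_self_nonneg (Xᵀ * Y + Y * Xᵀ)
    simp only [h1] at hp
    rw [← h0]
    simp at hp
    linarith
  · rw [hT] at hoff hv
    refine le_of_mul_le_mul_left ?_ h0
    generalize frobIP Y Y = N at *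
    generalize frobIP X X = S at *
    generalize frobIP (X * Y - Y * X) (X * Y - Y * X) = C at *
    generalize frobIP (Xᵀ * Y + Y * Xᵀ) (Xᵀ * Y + Y * Xᵀ) = E at *
    generalize (∑ i, ∑ j, (d i + d j) * X i j ^ 2) = G at *
    have := mul_le_mul_of_nonneg_left hoff h0.le
    subst hp
    nlinarith

theorem frobIP_conj {n : ℕ} (U V X : Matrix (Fin n) (Fin n) ℝ) (hU : U * Uᵀ = 1) (hV : V = Uᵀ) :
    frobIP (V * X * U) (V * X * U) = frobIP X X := by
  subst hV
  simp only [frobIP, Matrix.transpose_mul, Matrix.transpose_transpose]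
  have : Uᵀ * (Xᵀ * U) * (Uᵀ * X * U) = Uᵀ * (Xᵀ * X) * U := by
    calc _ = Uᵀ * (Xᵀ * (U * Uᵀ) * X) * U := by simp only [Matrix.mul_assoc]
      _ = _ := by rw [hU, Matrix.mul_one]
  rw [this, Matrix.trace_mul_comm, ← Matrix.mul_assoc, hU, Matrix.one_mul]

theorem bw_gen {n : ℕ} (X Y : Matrix (Fin n) (Fin n) ℝ) :
    frobIP (X * Y - Y * X) (X * Y - Y * X) ≤ 2 * frobIP X X * frobIP Y Y := by
  have hS : (Y * Yᵀ + Yᵀ * Y).IsHermitian := by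
    simp [Matrix.IsHermitian, Matrix.conjTranspose_eq_transpose_of_trivial]
  obtain ⟨U, d, hU, hD⟩ : ∃ (U : Matrix (Fin n) (Fin n) ℝ) (d : Fin n → ℝ), U * Uᵀ = 1 ∧
      Uᵀ * (Y * Yᵀ + Yᵀ * Y) * U = Matrix.diagonal d := by
    refine ⟨hS.eigenvectorUnitary, hS.eigenvalues, ?_, ?_⟩
    · have := Unitary.coe_mul_star_self hS.eigenvectorUnitary
      simpa [Matrix.star_eq_conjTranspose, Matrix.conjTranspose_eq_transpose_of_trivial] using this
    · have := hS.conjStarAlgAut_star_eigenvectorUnitary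
      simpa [Unitary.conjStarAlgAut_apply, Matrix.star_eq_conjTranspose,
        Matrix.conjTranspose_eq_transpose_of_trivial, Function.comp_def] using this
  have key : ∀ P Q : Matrix (Fin n) (Fin n) ℝ, (Uᵀ * P * U) * (Uᵀ * Q * U) = Uᵀ * (P * Q) * U := by
    intro P Q
    calc _ = Uᵀ * (P * (U * Uᵀ) * Q) * U := by simp only [Matrix.mul_assoc]
      _ = _ := by rw [hU, Matrix.mul_one]
  have hT : (Uᵀ * Y * U)ᵀ = Uᵀ * Yᵀ * U := by
    simp [Matrix.transpose_mul, Matrix.mul_assoc]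
  have := bw_diag (Uᵀ * X * U) (Uᵀ * Y * U) d (by
    rw [hT, key, key, ← hD, ← Matrix.add_mul, ← Matrix.mul_add])
  rwa [key, key, ← Matrix.sub_mul, ← Matrix.mul_sub, frobIP_conj U _ _ hU rfl,
    frobIP_conj U _ _ hU rfl, frobIP_conj U _ _ hU rfl] at this

theorem bw_full {n : ℕ} (A B : Matrix (Fin n) (Fin n) ℝ) :
    frobIP (A * B - B * A) (A * B - B * A)
      ≤ 2 * (frobIP A A * frobIP B B - frobIP A B ^ 2) := by
  rcases (frobIP_self_nonneg A).eq_or_lt with h0 | h0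
  · have h1 := bw_gen A B
    have h2 := frobIP_cs A B
    rw [← h0] at h1 h2 ⊢
    nlinarith [sq_nonneg (frobIP A B)]
  · set c := frobIP A B / frobIP A A with hc
    have hcA : c * frobIP A A = frobIP A B := div_mul_cancel₀ _ h0.ne'
    have h1 := bw_gen A (B - c • A)
    have h2 : A * (B - c • A) - (B - c • A) * A = A * B - B * A := by
      simp [Matrix.mul_sub, Matrix.sub_mul]
    have h3 : frobIP (B - c • A) (B - c • A)
        = frobIP B B - 2 * c * frobIP A B + c ^ 2 * frobIP A A := by
      simp only [frobIP_eq_sum, Finset.mul_sum, ← Finset.sum_sub_distrib, ← Finset.sum_add_distrib]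
      refine Finset.sum_congr rfl fun i _ => Finset.sum_congr rfl fun j _ => ?_
      simp only [Matrix.sub_apply, Matrix.smul_apply, smul_eq_mul]
      ring
    rw [h2, h3] at h1
    refine h1.trans (le_of_eq ?_)
    rw [← hcA]
    ring

/-- For all `n × n` real matrices `A`, `B`, the Frobenius norm of the commutator satisfies
`‖AB − BA‖_F² ≤ n · (‖A‖_F² · ‖B‖_F² − ⟨A,B⟩_F²)`. -/
theorem commutator_frobNorm_sq_le (n : ℕ) (A B : Matrix (Fin n) (Fin n) ℝ) :
    frobNorm (A * B - B * A) ^ 2 ≤ (n : ℝ) * (frobNorm A ^ 2 * frobNorm B ^ 2 - frobIP A B ^ 2) := by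
  simp only [frobNorm_sq]
  have hcs := sub_nonneg.2 (frobIP_cs A B)
  by_cases hn : 2 ≤ n
  · have : (2 : ℝ) ≤ n := by exact_mod_cast hn
    exact (bw_full A B).trans (mul_le_mul_of_nonneg_right this hcs)
  · have hz : A * B - B * A = 0 := by
      have hs : Subsingleton (Fin n) := Fin.subsingleton_iff_le_one.2 (by omega)
      ext i j
      obtain rfl := Subsingleton.elim i j
      have : ∀ k, k = i := fun k => Subsingleton.elim k i
      simp only [Matrix.sub_apply, Matrix.mul_apply, Matrix.zero_apply, ← Finset.sum_sub_distrib]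
      exact Finset.sum_eq_zero fun k _ => by rw [this k]; ring
    rw [hz]
    have : frobIP (0 : Matrix (Fin n) (Fin n) ℝ) 0 = 0 := by simp [frobIP]
    rw [this]
    exact mul_nonneg (Nat.cast_nonneg n) hcs
end

section
/- Regularized Kato inequality for the Frobenius norm: let u = (u_1,…,u_n): ℝⁿ → (n×n real matrices)ⁿ be twice continuously differentiable and, for ε > 0, set u_ε(y) = √(‖u(y)‖_F² + ε²), where ‖u‖_F² = Σ_j ‖u_j‖_F². Then at every point of ℝⁿ, Δu_ε ≥ ⟨u, Δu⟩_F / u_ε + (1/n)·Σ_{i,j} ‖[∂_i u_j, u_j]‖_F² / u_ε³, where Δ acts componentwise on u, Δu_ε is the Euclidean Laplacian of the scalar function u_ε, and ⟨u, Δu⟩_F = Σ_j ⟨u_j, Δu_j⟩_F. -/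
open scoped BigOperators

noncomputable section

/-- Euclidean space `ℝⁿ`. -/
abbrev En (n : ℕ) := EuclideanSpace ℝ (Fin n)

/-- `n × n` real matrices, represented entrywise. -/
abbrev Mat (n : ℕ) := Fin n → Fin n → ℝ

variable {n : ℕ}

/-- Frobenius inner product `⟨A,B⟩_F = tr(AᵀB) = Σ_{μν} A_{μν} B_{μν}`. -/
def fipE (A B : Mat n) : ℝ := ∑ μ, ∑ ν, A μ ν * B μ ν

/-- Frobenius norm. -/
def fnormE (A : Mat n) : ℝ := Real.sqrt (fipE A A)

/-- Matrix commutator `[A, B] = AB − BA`, entrywise. -/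
def brkt (A B : Mat n) : Mat n := fun μ ν => ∑ k, (A μ k * B k ν - B μ k * A k ν)

/-- `A` is skew-symmetric. -/
def skewM (A : Mat n) : Prop := ∀ μ ν, A ν μ = -A μ ν

/-- Partial derivative `∂_i f` of a scalar function on `ℝⁿ`. -/
def pder (i : Fin n) (f : En n → ℝ) (y : En n) : ℝ :=
  fderiv ℝ f y (EuclideanSpace.single i 1)

/-- Euclidean Laplacian `Δf = Σ_i ∂_i ∂_i f` of a scalar function on `ℝⁿ`. -/
def lapS (f : En n → ℝ) (y : En n) : ℝ := ∑ i, pder i (fun z => pder i f z) y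

/-- Componentwise partial derivative `∂_i u` of a matrix-valued function on `ℝⁿ`. -/
def pderM (i : Fin n) (u : En n → Mat n) (y : En n) : Mat n :=
  fun μ ν => pder i (fun z => u z μ ν) y

/-- Componentwise Laplacian `Δu` of a matrix-valued function on `ℝⁿ`. -/
def lapM (u : En n → Mat n) (y : En n) : Mat n := fun μ ν => lapS (fun z => u z μ ν) y

/-- The constant `a = √(n−2)/(2√2)`. -/
def aC (n : ℕ) : ℝ := Real.sqrt ((n : ℝ) - 2) / (2 * Real.sqrt 2)

/-- The constant `b = (1/2)(6n − 12 − (n+2)√(2n−4))`. -/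
def bC (n : ℕ) : ℝ := (1 / 2) * (6 * (n : ℝ) - 12 - ((n : ℝ) + 2) * Real.sqrt (2 * (n : ℝ) - 4))

/-- `σ_i(y)`, the skew matrix with entries `(σ_i(y))^μ_ν = δ_{iν} y^μ − δ_{iμ} y^ν`. -/
def sigmaM (i : Fin n) (y : En n) : Mat n :=
  fun μ ν => (if i = ν then y μ else 0) - (if i = μ then y ν else 0)

/-- The soliton connection `W_i(y) = σ_i(y)/(a|y|² + b)`. -/
def Wc (i : Fin n) (y : En n) : Mat n :=
  fun μ ν => sigmaM i y μ ν / (aC n * ‖y‖ ^ 2 + bC n)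

/-- The curvature `F_{ij} = ∂_i W_j − ∂_j W_i + [W_i, W_j]` of the soliton connection `W`. -/
def Fc (i j : Fin n) (y : En n) : Mat n :=
  pderM i (Wc j) y - pderM j (Wc i) y + brkt (Wc i y) (Wc j y)

/-- The linearized operator `L` of the rescaled Yang–Mills de Turck flow at the soliton `W`:
`(Lu)_j = Δu_j − (1/2)Σ_i y_i ∂_i u_j − (1/2)u_j + 2Σ_i [W_i, ∂_i u_j]
  + Σ_i [W_i, [W_i, u_j]] + 2Σ_i [u_i, F_{ij}]`. -/
def Lop (u : En n → Fin n → Mat n) (y : En n) (j : Fin n) : Mat n :=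
  lapM (fun z => u z j) y
    - (1 / 2 : ℝ) • (∑ i, y i • pderM i (fun z => u z j) y)
    - (1 / 2 : ℝ) • u y j
    + (2 : ℝ) • ∑ i, brkt (Wc i y) (pderM i (fun z => u z j) y)
    + ∑ i, brkt (Wc i y) (brkt (Wc i y) (u y j))
    + (2 : ℝ) • ∑ i, brkt (u y i) (Fc i j y)

/-- Squared Frobenius norm of a tuple of matrices: `‖u‖_F² = Σ_j ‖u_j‖_F²`. -/
def tnormSq (v : Fin n → Mat n) : ℝ := ∑ j, fipE (v j) (v j)

/-- The Gaussian weight `ρ(y) = e^{−|y|²/4}`. -/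
def gauss (y : En n) : ℝ := Real.exp (-‖y‖ ^ 2 / 4)

end

theorem aux_comm (n : ℕ) (A B : Mat n) :
    (n : ℝ)⁻¹ * fipE (brkt A B) (brkt A B) ≤ fipE A A * fipE B B - fipE B A ^ 2 := by
  rcases Nat.eq_zero_or_pos n with h0 | hn
  · subst h0; simp [fipE]
  have hn' : (0 : ℝ) < n := by exact_mod_cast hn
  obtain ⟨C, hC⟩ : ∃ C, C = brkt A B := ⟨_, rfl⟩
  rw [← hC]
  have hCe : ∀ μ ν, ∑ k, (A μ k * B k ν - B μ k * A k ν) = C μ ν := by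
    intro μ ν; rw [hC]; rfl
  have key : 0 ≤ ∑ μ, ∑ k, ∑ l, ∑ ν, ((A μ k * B l ν - B μ k * A l ν)
      - (n : ℝ)⁻¹ * ((if k = l then C μ ν else 0) - (if ν = μ then C l k else 0))) ^ 2 :=
    Finset.sum_nonneg fun μ _ => Finset.sum_nonneg fun k _ => Finset.sum_nonneg fun l _ =>
      Finset.sum_nonneg fun ν _ => sq_nonneg _
  have e : ∀ μ k l ν : Fin n, ((A μ k * B l ν - B μ k * A l ν)
      - (n : ℝ)⁻¹ * ((if k = l then C μ ν else 0) - (if ν = μ then C l k else 0))) ^ 2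
      = ((A μ k * A μ k) * (B l ν * B l ν) + (B μ k * B μ k) * (A l ν * A l ν)
          - 2 * ((B μ k * A μ k) * (B l ν * A l ν)))
        - 2 * (n : ℝ)⁻¹ * (if k = l then (A μ k * B l ν - B μ k * A l ν) * C μ ν else 0)
        - 2 * (n : ℝ)⁻¹ * (if ν = μ then (A l ν * B μ k - B l ν * A μ k) * C l k else 0)
        + (n : ℝ)⁻¹ ^ 2 * (if k = l then C μ ν * C μ ν else 0)
        + (n : ℝ)⁻¹ ^ 2 * (if ν = μ then C l k * C l k else 0)
        - 2 * (n : ℝ)⁻¹ ^ 2 * (if k = l then (if ν = μ then C μ ν * C l k else 0) else 0) := by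
    intro μ k l ν
    split_ifs <;> ring
  simp only [e, Finset.sum_add_distrib, Finset.sum_sub_distrib, ← Finset.mul_sum] at key
  have h1 : ∑ μ, ∑ k, ∑ l, ∑ ν, (if k = l then (A μ k * B l ν - B μ k * A l ν) * C μ ν else 0)
      = fipE C C := by
    unfold fipE
    refine Finset.sum_congr rfl fun μ _ => ?_
    have : ∀ k, ∑ l, ∑ ν, (if k = l then (A μ k * B l ν - B μ k * A l ν) * C μ ν else 0)
        = ∑ ν, (A μ k * B k ν - B μ k * A k ν) * C μ ν := by
      intro k
      rw [Finset.sum_eq_single k] <;> simp +contextual [eq_comm]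
    simp only [this]
    rw [Finset.sum_comm]
    refine Finset.sum_congr rfl fun ν _ => ?_
    rw [← Finset.sum_mul, hCe]
  have h2 : ∑ μ, ∑ k, ∑ l, ∑ ν, (if ν = μ then (A l ν * B μ k - B l ν * A μ k) * C l k else 0)
      = fipE C C := by
    unfold fipE
    simp only [Finset.sum_ite_eq', Finset.mem_univ, if_true]
    rw [Finset.sum_comm]
    have : ∀ k, ∑ μ, ∑ l, (A l μ * B μ k - B l μ * A μ k) * C l k = ∑ l, C l k * C l k := by
      intro k
      rw [Finset.sum_comm]
      refine Finset.sum_congr rfl fun l _ => ?_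
      rw [← Finset.sum_mul, hCe]
    simp only [this]
    rw [Finset.sum_comm]
  have h3 : ∑ μ, ∑ k : Fin n, ∑ l, ∑ ν, (if k = l then C μ ν * C μ ν else 0)
      = n * fipE C C := by
    unfold fipE
    rw [Finset.mul_sum]
    refine Finset.sum_congr rfl fun μ _ => ?_
    have : ∀ k : Fin n, ∑ l, ∑ ν, (if k = l then C μ ν * C μ ν else 0)
        = ∑ ν, C μ ν * C μ ν := by
      intro k
      rw [Finset.sum_eq_single k] <;> simp +contextual [eq_comm]
    simp [this]
  have h4 : ∑ μ : Fin n, ∑ k, ∑ l, ∑ ν, (if ν = μ then C l k * C l k else 0)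
      = n * fipE C C := by
    unfold fipE
    simp only [Finset.sum_ite_eq', Finset.mem_univ, if_true]
    rw [Finset.sum_comm (f := fun μ ν => C μ ν * C μ ν)]
    simp
  have h5 : ∑ μ, ∑ k, ∑ l, ∑ ν, (if k = l then (if ν = μ then C μ ν * C l k else 0) else 0)
      = (∑ μ, C μ μ) ^ 2 := by
    rw [sq, Finset.sum_mul_sum]
    refine Finset.sum_congr rfl fun μ _ => Finset.sum_congr rfl fun k _ => ?_
    rw [Finset.sum_eq_single k] <;> simp +contextual [eq_comm]
  have hs : ∀ X Y X' Y' : Mat n, ∑ μ, ∑ k, ∑ l, ∑ ν, (X μ k * Y μ k) * (X' l ν * Y' l ν)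
      = fipE X Y * fipE X' Y' := by
    intro X Y X' Y'
    simp only [fipE, ← Finset.mul_sum, ← Finset.sum_mul]
  rw [h1, h2, h3, h4, h5] at key
  simp only [← Finset.mul_sum, ← Finset.sum_mul] at key
  change 0 ≤ fipE A A * fipE B B + fipE B B * fipE A A - 2 * (fipE B A * fipE B A) - _ - _ + _ + _ - _ at key
  have hx : (n : ℝ)⁻¹ ^ 2 * (n * fipE C C) = (n : ℝ)⁻¹ * fipE C C := by
    field_simp
  rw [hx] at key
  have : 0 ≤ (n : ℝ)⁻¹ ^ 2 * (∑ μ, C μ μ) ^ 2 := by positivity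
  linarith

theorem aux_cs (n : ℕ) (A B : Mat n) : fipE A B ^ 2 ≤ fipE A A * fipE B B := by
  have := aux_comm n B A
  have h : 0 ≤ (n : ℝ)⁻¹ * fipE (brkt B A) (brkt B A) := by
    unfold fipE
    exact mul_nonneg (by positivity) (Finset.sum_nonneg fun _ _ => Finset.sum_nonneg fun _ _ =>
      mul_self_nonneg _)
  linarith

theorem aux_nonneg (n : ℕ) (A : Mat n) : 0 ≤ fipE A A :=
  Finset.sum_nonneg fun _ _ => Finset.sum_nonneg fun _ _ => mul_self_nonneg _

theorem aux_gram (n : ℕ) (u v : Fin n → Mat n) :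
    (n : ℝ)⁻¹ * ∑ j, fipE (brkt (v j) (u j)) (brkt (v j) (u j))
      ≤ tnormSq v * tnormSq u - (∑ j, fipE (u j) (v j)) ^ 2 := by
  have hh : ∀ j k, 0 ≤ fipE (v j) (v j) * fipE (u k) (u k) + fipE (v k) (v k) * fipE (u j) (u j)
      - 2 * (fipE (u j) (v j) * fipE (u k) (v k)) := by
    intro j k
    have h1 := aux_cs n (u j) (v j)
    have h2 := aux_cs n (u k) (v k)
    have a1 := aux_nonneg n (u j)
    have a2 := aux_nonneg n (u k)
    have a3 := aux_nonneg n (v j)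
    have a4 := aux_nonneg n (v k)
    generalize fipE (u j) (v j) = c at *
    generalize fipE (u k) (v k) = d at *
    generalize fipE (u j) (u j) = p at *
    generalize fipE (u k) (u k) = q at *
    generalize fipE (v j) (v j) = r at *
    generalize fipE (v k) (v k) = s at *
    have h3 : c ^ 2 * d ^ 2 ≤ (p * r) * (q * s) := by gcongr
    have h4 : (2 * (c * d)) ^ 2 ≤ (r * q + s * p) ^ 2 := by
      nlinarith [sq_nonneg (r * q - s * p)]
    have := abs_le_of_sq_le_sq h4 (by positivity)
    linarith [le_abs_self (2 * (c * d))]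
  have h1 : ∑ j, (n : ℝ)⁻¹ * fipE (brkt (v j) (u j)) (brkt (v j) (u j))
      ≤ ∑ j, (fipE (v j) (v j) * fipE (u j) (u j) - fipE (u j) (v j) ^ 2) :=
    Finset.sum_le_sum fun j _ => aux_comm n (v j) (u j)
  have h2 : ∑ j, 2 * (fipE (v j) (v j) * fipE (u j) (u j) - fipE (u j) (v j) ^ 2)
     ≤ ∑ j, ∑ k, (fipE (v j) (v j) * fipE (u k) (u k) + fipE (v k) (v k) * fipE (u j) (u j)
      - 2 * (fipE (u j) (v j) * fipE (u k) (v k))) := by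
    refine Finset.sum_le_sum fun j _ => ?_
    refine le_trans (le_of_eq ?_) (Finset.single_le_sum (fun k _ => hh j k) (Finset.mem_univ j))
    ring
  simp only [Finset.sum_add_distrib, Finset.sum_sub_distrib, ← Finset.mul_sum,
    ← Finset.sum_mul] at h2
  rw [← Finset.mul_sum] at h1
  simp only [Finset.sum_sub_distrib] at h1
  unfold tnormSq
  linarith

theorem aux_pder {n : ℕ} {f : En n → ℝ} {f' : En n →L[ℝ] ℝ} {y : En n} (i : Fin n)
    (h : HasFDerivAt f f' y) : pder i f y = f' (EuclideanSpace.single i 1) := by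
  unfold pder; rw [h.fderiv]

theorem aux_pder_sqrt {n : ℕ} {ι : Type} [Fintype ι] (g : ι → En n → ℝ)
    (hg : ∀ a, ContDiff ℝ 2 (g a)) (ε : ℝ) (hε : 0 < ε) (i : Fin n) (z : En n) :
    pder i (fun z => Real.sqrt (∑ a, g a z * g a z + ε ^ 2)) z
      = (∑ a, g a z * pder i (g a) z) * (Real.sqrt (∑ a, g a z * g a z + ε ^ 2))⁻¹ := by
  have hd : ∀ a, HasFDerivAt (g a) (fderiv ℝ (g a) z) z := fun a =>
    ((hg a).differentiable (by norm_num) z).hasFDerivAt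
  have hpos : 0 < ∑ a, g a z * g a z + ε ^ 2 := by
    have : 0 ≤ ∑ a, g a z * g a z := Finset.sum_nonneg fun _ _ => mul_self_nonneg _
    positivity
  have h := ((HasFDerivAt.fun_sum (u := Finset.univ) fun a _ => (hd a).fun_mul (hd a)).add_const
    (ε ^ 2)).sqrt hpos.ne'
  rw [aux_pder i h]
  have : 0 < Real.sqrt (∑ a, g a z * g a z + ε ^ 2) := Real.sqrt_pos.2 hpos
  simp [pder, Finset.sum_add_distrib]
  field_simp
  ring

theorem aux_lap {n : ℕ} {ι : Type} [Fintype ι] (g : ι → En n → ℝ)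
    (hg : ∀ a, ContDiff ℝ 2 (g a)) (ε : ℝ) (hε : 0 < ε) (i : Fin n) (z : En n) :
    pder i (fun z => pder i (fun z => Real.sqrt (∑ a, g a z * g a z + ε ^ 2)) z) z
      = (∑ a, g a z * pder i (fun z => pder i (g a) z) z)
            / Real.sqrt (∑ a, g a z * g a z + ε ^ 2)
        + ((∑ a, pder i (g a) z * pder i (g a) z) * (∑ a, g a z * g a z + ε ^ 2)
          - (∑ a, g a z * pder i (g a) z) ^ 2)
            / Real.sqrt (∑ a, g a z * g a z + ε ^ 2) ^ 3 := by
  simp only [aux_pder_sqrt g hg ε hε i]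
  have hd : ∀ a, HasFDerivAt (g a) (fderiv ℝ (g a) z) z := fun a =>
    ((hg a).differentiable (by norm_num) z).hasFDerivAt
  have hd2 : ∀ a, HasFDerivAt (fun z => pder i (g a) z)
      (fderiv ℝ (fun z => pder i (g a) z) z) z := fun a => by
    have : ContDiff ℝ 1 (fun z => pder i (g a) z) := by
      unfold pder
      exact ((hg a).fderiv_right (m := 1) (by norm_num)).clm_apply contDiff_const
    exact (this.differentiable (by norm_num) z).hasFDerivAt
  have hpos : 0 < ∑ a, g a z * g a z + ε ^ 2 := by
    have : 0 ≤ ∑ a, g a z * g a z := Finset.sum_nonneg fun _ _ => mul_self_nonneg _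
    positivity
  have hr : 0 < Real.sqrt (∑ a, g a z * g a z + ε ^ 2) := Real.sqrt_pos.2 hpos
  have h := ((HasFDerivAt.fun_sum (u := Finset.univ) fun a _ => (hd a).fun_mul (hd a)).add_const
    (ε ^ 2)).sqrt hpos.ne'
  have h' := (HasFDerivAt.fun_sum (u := Finset.univ) fun a _ => (hd a).fun_mul (hd2 a)).fun_mul
    ((hasDerivAt_inv hr.ne').comp_hasFDerivAt z h)
  have h2 := aux_pder i h'
  simp only [Function.comp_def] at h2
  refine h2.trans ?_
  have hsq : Real.sqrt (∑ a, g a z * g a z + ε ^ 2) ^ 2 = ∑ a, g a z * g a z + ε ^ 2 :=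
    Real.sq_sqrt hpos.le
  clear h2 h' h
  generalize ∑ a, g a z * g a z + ε ^ 2 = S at *
  clear hsq
  have hS := Real.sq_sqrt hpos.le
  generalize Real.sqrt S = r at *
  subst hS
  have hp : ∀ (f : En n → ℝ) (z : En n),
      fderiv ℝ f z (EuclideanSpace.single i 1) = pder i f z := fun _ _ => rfl
  simp [Finset.sum_add_distrib, hp, ← Finset.mul_sum]
  field_simp
  ring

theorem regularized_kato_inequality (n : ℕ) (u : En n → Fin n → Mat n)
    (hu : ContDiff ℝ 2 u) (ε : ℝ) (hε : 0 < ε) (y : En n) :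
    lapS (fun z => Real.sqrt (tnormSq (u z) + ε ^ 2)) y ≥
      (∑ j, fipE (u y j) (lapM (fun z => u z j) y)) / Real.sqrt (tnormSq (u y) + ε ^ 2)
      + (n : ℝ)⁻¹ *
          (∑ i, ∑ j, fipE (brkt (pderM i (fun z => u z j) y) (u y j))
            (brkt (pderM i (fun z => u z j) y) (u y j)))
          / Real.sqrt (tnormSq (u y) + ε ^ 2) ^ 3 := by
  have hg : ∀ a : Fin n × Fin n × Fin n, ContDiff ℝ 2 (fun z => u z a.1 a.2.1 a.2.2) := by
    intro a
    have h1 := contDiff_pi.1 hu a.1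
    have h2 := contDiff_pi.1 h1 a.2.1
    exact contDiff_pi.1 h2 a.2.2
  have hl := fun i => aux_lap (fun (a : Fin n × Fin n × Fin n) z => u z a.1 a.2.1 a.2.2)
    hg ε hε i y
  simp only [Fintype.sum_prod_type] at hl
  have hl' : ∀ i, pder i (fun z => pder i (fun z => Real.sqrt (tnormSq (u z) + ε ^ 2)) z) y
     = (∑ j, fipE (u y j) (fun μ ν => pder i (fun z => pder i (fun z => u z j μ ν) z) y))
          / Real.sqrt (tnormSq (u y) + ε ^ 2)
       + (tnormSq (fun j => pderM i (fun z => u z j) y) * (tnormSq (u y) + ε ^ 2)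
         - (∑ j, fipE (u y j) (pderM i (fun z => u z j) y)) ^ 2)
          / Real.sqrt (tnormSq (u y) + ε ^ 2) ^ 3 := hl
  have hlap : ∑ j, fipE (u y j) (lapM (fun z => u z j) y) = ∑ i, ∑ j, fipE (u y j)
      (fun μ ν => pder i (fun z => pder i (fun z => u z j μ ν) z) y) := by
    rw [Finset.sum_comm]
    refine Finset.sum_congr rfl fun j _ => ?_
    unfold fipE lapM lapS
    conv_rhs => rw [Finset.sum_comm]
    refine Finset.sum_congr rfl fun μ _ => ?_
    conv_rhs => rw [Finset.sum_comm]
    refine Finset.sum_congr rfl fun ν _ => ?_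
    rw [Finset.mul_sum]
  rw [hlap]
  unfold lapS
  simp only [hl']
  rw [Finset.sum_add_distrib, Finset.sum_div, Finset.mul_sum, Finset.sum_div]
  refine add_le_add le_rfl (Finset.sum_le_sum fun i _ => ?_)
  refine div_le_div_of_nonneg_right ?_ (by positivity)
  have h := aux_gram n (u y) (fun j => pderM i (fun z => u z j) y)
  have h0 : 0 ≤ tnormSq (fun j => pderM i (fun z => u z j) y) :=
    Finset.sum_nonneg fun j _ => aux_nonneg n _
  nlinarith [mul_nonneg h0 (sq_nonneg ε)]
end

section
/- Pointwise Kato inequality for the Frobenius norm: let u = (u_1,…,u_n): ℝⁿ → (n×n real matrices)ⁿ be twice continuously differentiable and let x ∈ ℝⁿ be a point where u(x) ≠ 0. Then the scalar function y ↦ ‖u(y)‖_F is twice differentiable near x and at x satisfies Δ‖u‖_F ≥ ⟨u, Δu⟩_F / ‖u‖_F + (1/n)·Σ_{i,j} ‖[∂_i u_j, u_j]‖_F² / ‖u‖_F³, where Δ acts componentwise on u and ⟨u, Δu⟩_F = Σ_j ⟨u_j, Δu_j⟩_F. -/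
open scoped BigOperators

section KatoHelpers

lemma kato_lagrange {ι : Type*} [Fintype ι] (f g : ι → ℝ) :
    ∑ a, ∑ b, (f a * g b - f b * g a) ^ 2
      = 2 * ((∑ a, f a ^ 2) * (∑ a, g a ^ 2) - (∑ a, f a * g a) ^ 2) := by
  have h1 : (∑ a, f a ^ 2) * (∑ a, g a ^ 2) = ∑ a, ∑ b, f a ^ 2 * g b ^ 2 :=
    Finset.sum_mul_sum ..
  have h2 : (∑ a, f a ^ 2) * (∑ a, g a ^ 2) = ∑ a, ∑ b, f b ^ 2 * g a ^ 2 := by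
    rw [h1, Finset.sum_comm]
  have h3 : (∑ a, f a * g a) ^ 2 = ∑ a, ∑ b, (f a * g a) * (f b * g b) := by
    rw [sq, Finset.sum_mul_sum]
  have h4 : ∑ a, ∑ b, (f a * g b - f b * g a) ^ 2
      = ∑ a, ∑ b, f a ^ 2 * g b ^ 2 + ∑ a, ∑ b, f b ^ 2 * g a ^ 2
        - 2 * ∑ a, ∑ b, (f a * g a) * (f b * g b) := by
    simp only [Finset.mul_sum, ← Finset.sum_add_distrib, ← Finset.sum_sub_distrib]
    refine Finset.sum_congr rfl fun a _ => Finset.sum_congr rfl fun b _ => ?_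
    ring
  rw [h4, ← h1, ← h2, ← h3]; ring

/-- Row sums of an antisymmetric matrix. -/
lemma kato_antisymm (n : ℕ) (w : Fin n → Fin n → ℝ) (hw : ∀ a b, w b a = - w a b) :
    ∑ a, (∑ b, w a b) ^ 2 ≤ n * (1 / 2 * ∑ a, ∑ b, w a b ^ 2) := by
  rcases Nat.eq_zero_or_pos n with rfl | hn
  · simp
  have hn' : (0 : ℝ) < n := by exact_mod_cast hn
  set d : Fin n → ℝ := fun a => ∑ b, w a b with hd
  have hd0 : ∑ a, d a = 0 := by
    have : ∑ a, d a = - ∑ a, d a := by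
      calc ∑ a, d a = ∑ b, ∑ a, w a b := Finset.sum_comm
        _ = ∑ b, ∑ a, - w b a :=
          Finset.sum_congr rfl fun b _ => Finset.sum_congr rfl fun a _ => hw b a
        _ = - ∑ a, d a := by simp only [Finset.sum_neg_distrib, hd]
    linarith
  have hc1 : ∑ a, ∑ b, w a b * d a = ∑ a, d a ^ 2 := by
    refine Finset.sum_congr rfl fun a _ => ?_
    rw [← Finset.sum_mul, sq]
  have hc2 : ∑ a, ∑ b, w a b * d b = - ∑ a, d a ^ 2 := by
    rw [Finset.sum_comm, ← hc1, ← Finset.sum_neg_distrib]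
    refine Finset.sum_congr rfl fun a _ => ?_
    rw [← Finset.sum_neg_distrib]
    refine Finset.sum_congr rfl fun b _ => ?_
    rw [hw a b]; ring
  have hd1 : ∑ a : Fin n, ∑ _b : Fin n, d a ^ 2 = n * ∑ a, d a ^ 2 := by
    simp [Finset.mul_sum]
  have hd2 : ∑ _a : Fin n, ∑ b : Fin n, d b ^ 2 = n * ∑ a, d a ^ 2 := by
    simp
  have hd3 : ∑ a, ∑ b, d a * d b = 0 := by
    rw [← Finset.sum_mul_sum, hd0, zero_mul]
  have key : 0 ≤ ∑ a, ∑ b, (n * w a b - (d a - d b)) ^ 2 :=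
    Finset.sum_nonneg fun a _ => Finset.sum_nonneg fun b _ => sq_nonneg _
  have e : ∑ a, ∑ b, (n * w a b - (d a - d b)) ^ 2
      = n ^ 2 * ∑ a, ∑ b, w a b ^ 2 - 2 * n * ∑ a, ∑ b, w a b * d a
        + 2 * n * ∑ a, ∑ b, w a b * d b + ∑ a : Fin n, ∑ _b : Fin n, d a ^ 2
        + ∑ _a : Fin n, ∑ b : Fin n, d b ^ 2 - 2 * ∑ a, ∑ b, d a * d b := by
    simp only [Finset.mul_sum, ← Finset.sum_add_distrib, ← Finset.sum_sub_distrib]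
    refine Finset.sum_congr rfl fun a _ => Finset.sum_congr rfl fun b _ => ?_
    ring
  rw [e, hc1, hc2, hd1, hd2, hd3] at key
  have : 0 ≤ n * (n * (∑ a, ∑ b, w a b ^ 2) - 2 * ∑ a, d a ^ 2) := by linarith
  have := nonneg_of_mul_nonneg_right this hn'
  linarith

/-- Commutator bound by the pairwise minors. -/
lemma kato_brkt (n : ℕ) (U V : Mat n) :
    fipE (brkt V U) (brkt V U)
      ≤ n * (1 / 2 * ∑ a : Fin n × Fin n, ∑ b : Fin n × Fin n,
          (U a.1 a.2 * V b.1 b.2 - U b.1 b.2 * V a.1 a.2) ^ 2) := by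
  set W : Fin n → Fin n → Fin n → Fin n → ℝ :=
    fun p q r s => (V p q * U r s - U p q * V r s) with hW
  have hWs : ∀ p q r s, W r s p q = - W p q r s := by
    intro p q r s; simp only [hW]; ring
  have hS : ∑ a : Fin n × Fin n, ∑ b : Fin n × Fin n,
          (U a.1 a.2 * V b.1 b.2 - U b.1 b.2 * V a.1 a.2) ^ 2
      = ∑ p, ∑ q, ∑ r, ∑ s, W p q r s ^ 2 := by
    simp only [Fintype.sum_prod_type, hW]
    refine Finset.sum_congr rfl fun p _ => Finset.sum_congr rfl fun q _ =>
      Finset.sum_congr rfl fun r _ => Finset.sum_congr rfl fun s _ => ?_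
    ring
  have hdiag : ∑ p, (∑ k, W p k k p) ^ 2 ≤ n * (1 / 2 * ∑ p, ∑ k, W p k k p ^ 2) :=
    kato_antisymm n (fun p k => W p k k p) (fun a b => hWs _ _ _ _)
  have hoff : ∀ p s, (∑ k, W p k k s) ^ 2 ≤ n * ∑ k, W p k k s ^ 2 := by
    intro p s
    simpa using sq_sum_le_card_mul_sum_sq (s := Finset.univ) (f := fun k => W p k k s)
  have hL : fipE (brkt V U) (brkt V U) = ∑ p, ∑ s, (∑ k, W p k k s) ^ 2 := by
    simp only [fipE, brkt, hW, sq]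
  have hsplit : ∑ p, ∑ s, (∑ k, W p k k s) ^ 2
      = ∑ p, (∑ k, W p k k p) ^ 2
        + ∑ p, ∑ s, (if p = s then 0 else (∑ k, W p k k s) ^ 2) := by
    rw [← Finset.sum_add_distrib]
    refine Finset.sum_congr rfl fun p _ => ?_
    have : (∑ k, W p k k p) ^ 2 = ∑ s, (if p = s then (∑ k, W p k k s) ^ 2 else 0) := by
      simp
    rw [this, ← Finset.sum_add_distrib]
    refine Finset.sum_congr rfl fun s _ => ?_
    split_ifs <;> simp
  have hoff2 : ∑ p, ∑ s, (if p = s then 0 else (∑ k, W p k k s) ^ 2)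
      ≤ n * ∑ p, ∑ s, (if p = s then 0 else ∑ k, W p k k s ^ 2) := by
    simp only [Finset.mul_sum]
    refine Finset.sum_le_sum fun p _ => Finset.sum_le_sum fun s _ => ?_
    split_ifs
    · simp
    · exact hoff p s
  -- the three index families
  have t1 : ∑ p, ∑ q, ∑ r, ∑ s, (if q = r then (if p = s then 0 else W p q r s ^ 2) else 0)
      = ∑ p, ∑ s, (if p = s then 0 else ∑ k, W p k k s ^ 2) := by
    refine Finset.sum_congr rfl fun p _ => ?_
    have : ∀ q, ∑ r, ∑ s, (if q = r then (if p = s then 0 else W p q r s ^ 2) else 0)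
        = ∑ s, (if p = s then 0 else W p q q s ^ 2) := by
      intro q
      rw [Finset.sum_comm]
      simp
    simp only [this]
    rw [Finset.sum_comm]
    refine Finset.sum_congr rfl fun s _ => ?_
    split_ifs <;> simp
  have t3 : ∑ p, ∑ q, ∑ r, ∑ s, (if q = r then (if p = s then W p q r s ^ 2 else 0) else 0)
      = ∑ p, ∑ k, W p k k p ^ 2 := by
    refine Finset.sum_congr rfl fun p _ => Finset.sum_congr rfl fun q _ => ?_
    rw [Finset.sum_comm]
    simp
  have t2 : ∑ p, ∑ q, ∑ r, ∑ s, (if p = s then (if q = r then 0 else W p q r s ^ 2) else 0)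
      = ∑ p, ∑ s, (if p = s then 0 else ∑ k, W p k k s ^ 2) := by
    have : ∀ p q, ∑ r, ∑ s, (if p = s then (if q = r then 0 else W p q r s ^ 2) else 0)
        = ∑ r, (if q = r then 0 else W p q r p ^ 2) := by
      intro p q
      simp
    simp only [this]
    have h : ∀ q r, ∑ p, (if q = r then 0 else W p q r p ^ 2)
        = (if r = q then 0 else ∑ k, W r k k q ^ 2) := by
      intro q r
      by_cases hqr : q = r
      · simp [hqr]
      · have : ¬ r = q := fun h => hqr h.symm
        simp only [hqr, this, if_false]
        refine Finset.sum_congr rfl fun k _ => ?_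
        rw [hWs r k k q, neg_sq]
    rw [Finset.sum_comm]
    rw [Finset.sum_comm (f := fun p s => (if p = s then 0 else ∑ k, W p k k s ^ 2))]
    refine Finset.sum_congr rfl fun q _ => ?_
    rw [Finset.sum_comm]
    exact Finset.sum_congr rfl fun r _ => h q r
  have hle : 2 * ∑ p, ∑ s, (if p = s then 0 else ∑ k, W p k k s ^ 2) + ∑ p, ∑ k, W p k k p ^ 2
      ≤ ∑ p, ∑ q, ∑ r, ∑ s, W p q r s ^ 2 := by
    rw [two_mul]
    nth_rewrite 1 [← t1]
    rw [← t2, ← t3]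
    simp only [← Finset.sum_add_distrib]
    refine Finset.sum_le_sum fun p _ => Finset.sum_le_sum fun q _ =>
      Finset.sum_le_sum fun r _ => Finset.sum_le_sum fun s _ => ?_
    have := sq_nonneg (W p q r s)
    split_ifs <;> simp_all
  rw [hL, hsplit, hS]
  have hn : (0 : ℝ) ≤ n := Nat.cast_nonneg n
  have := mul_le_mul_of_nonneg_left hle hn
  linarith

lemma kato_algebra (n : ℕ) (hn : 0 < n) (U V : Fin n → Mat n) :
    (n : ℝ)⁻¹ * ∑ j, fipE (brkt (V j) (U j)) (brkt (V j) (U j))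
      ≤ (∑ c : Fin n × Fin n × Fin n, U c.1 c.2.1 c.2.2 ^ 2)
          * (∑ c : Fin n × Fin n × Fin n, V c.1 c.2.1 c.2.2 ^ 2)
        - (∑ c : Fin n × Fin n × Fin n, U c.1 c.2.1 c.2.2 * V c.1 c.2.1 c.2.2) ^ 2 := by
  have hn' : (0 : ℝ) < n := by exact_mod_cast hn
  have hlag := kato_lagrange (fun c : Fin n × Fin n × Fin n => U c.1 c.2.1 c.2.2)
    (fun c => V c.1 c.2.1 c.2.2)
  have hsub : ∑ j, ∑ a : Fin n × Fin n, ∑ b : Fin n × Fin n,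
          (U j a.1 a.2 * V j b.1 b.2 - U j b.1 b.2 * V j a.1 a.2) ^ 2
      ≤ ∑ a : Fin n × Fin n × Fin n, ∑ b : Fin n × Fin n × Fin n,
        (U a.1 a.2.1 a.2.2 * V b.1 b.2.1 b.2.2 - U b.1 b.2.1 b.2.2 * V a.1 a.2.1 a.2.2) ^ 2 := by
    rw [Fintype.sum_prod_type]
    refine Finset.sum_le_sum fun j _ => Finset.sum_le_sum fun a _ => ?_
    refine le_of_le_of_eq ?_ (Fintype.sum_prod_type _).symm
    exact Finset.single_le_sum (f := fun k => ∑ b : Fin n × Fin n,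
      (U j a.1 a.2 * V k b.1 b.2 - U k b.1 b.2 * V j a.1 a.2) ^ 2)
      (fun k _ => Finset.sum_nonneg fun b _ => sq_nonneg _) (Finset.mem_univ j)
  have hb : ∑ j, fipE (brkt (V j) (U j)) (brkt (V j) (U j))
      ≤ ∑ j, n * (1 / 2 * ∑ a : Fin n × Fin n, ∑ b : Fin n × Fin n,
          (U j a.1 a.2 * V j b.1 b.2 - U j b.1 b.2 * V j a.1 a.2) ^ 2) :=
    Finset.sum_le_sum fun j _ => kato_brkt n (U j) (V j)
  rw [← Finset.mul_sum, ← Finset.mul_sum] at hb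
  rw [inv_mul_le_iff₀ hn']
  refine hb.trans (mul_le_mul_of_nonneg_left ?_ hn'.le)
  linarith

lemma kato_calculus {n : ℕ} {ι : Type*} [Fintype ι] (f : ι → En n → ℝ)
    (hf : ∀ c, ContDiff ℝ 2 (f c)) (x : En n) (hx : 0 < ∑ c, f c x ^ 2) (i : Fin n) :
    pder i (fun z => pder i (fun y => Real.sqrt (∑ c, f c y ^ 2)) z) x
      = (∑ c, f c x * pder i (fun z => pder i (f c) z) x) / Real.sqrt (∑ c, f c x ^ 2)
        + ((∑ c, f c x ^ 2) * (∑ c, pder i (f c) x ^ 2) - (∑ c, f c x * pder i (f c) x) ^ 2)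
          / Real.sqrt (∑ c, f c x ^ 2) ^ 3 := by
  have hfd : ∀ c y, HasFDerivAt (f c) (fderiv ℝ (f c) y) y := fun c y =>
    ((hf c).differentiable (by norm_num) y).hasFDerivAt
  have hSd : ∀ y, HasFDerivAt (fun y => ∑ c, f c y ^ 2)
      (∑ c, (2 * f c y) • fderiv ℝ (f c) y) y := by
    intro y
    refine HasFDerivAt.fun_sum fun c _ => ?_
    simpa using (hfd c y).pow 2
  have hNd : ∀ y, 0 < ∑ c, f c y ^ 2 → HasFDerivAt (fun y => Real.sqrt (∑ c, f c y ^ 2))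
      ((1 / (2 * Real.sqrt (∑ c, f c y ^ 2))) • ∑ c, (2 * f c y) • fderiv ℝ (f c) y) y :=
    fun y hy => (hSd y).sqrt hy.ne'
  have hpN : ∀ y, 0 < ∑ c, f c y ^ 2 → pder i (fun y => Real.sqrt (∑ c, f c y ^ 2)) y
      = (∑ c, f c y * pder i (f c) y) * (Real.sqrt (∑ c, f c y ^ 2))⁻¹ := by
    intro y hy
    have hs := Real.sqrt_pos.2 hy
    rw [pder, (hNd y hy).fderiv]
    simp only [ContinuousLinearMap.smul_apply, ContinuousLinearMap.sum_apply, smul_eq_mul, pder,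
      mul_assoc]
    rw [← Finset.mul_sum]
    field_simp
  have hcont : Continuous fun y => ∑ c, f c y ^ 2 :=
    continuous_finset_sum _ fun c _ => (hf c).continuous.pow 2
  have hev : ∀ᶠ y in nhds x, 0 < ∑ c, f c y ^ 2 :=
    hcont.continuousAt.eventually (lt_mem_nhds hx)
  have hee : (fun z => pder i (fun y => Real.sqrt (∑ c, f c y ^ 2)) z) =ᶠ[nhds x]
      fun y => (∑ c, f c y * pder i (f c) y) * (Real.sqrt (∑ c, f c y ^ 2))⁻¹ :=
    hev.mono fun y hy => hpN y hy
  have hpd : ∀ c, HasFDerivAt (fun z => pder i (f c) z)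
      (fderiv ℝ (fun z => pder i (f c) z) x) x := by
    intro c
    have h1 : ContDiff ℝ 1 (fderiv ℝ (f c)) := (hf c).fderiv_right (by norm_num)
    have h2 : ContDiff ℝ 1 (fun z => pder i (f c) z) := h1.clm_apply contDiff_const
    exact (h2.differentiable (by norm_num) x).hasFDerivAt
  have hnum : HasFDerivAt (fun y => ∑ c, f c y * pder i (f c) y)
      (∑ c, (f c x • fderiv ℝ (fun z => pder i (f c) z) x
        + pder i (f c) x • fderiv ℝ (f c) x)) x :=
    HasFDerivAt.fun_sum fun c _ => (hfd c x).mul (hpd c)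
  have hs := Real.sqrt_pos.2 hx
  have hinv := (hasDerivAt_inv hs.ne').comp_hasFDerivAt x (hNd x hx)
  have htot := hnum.mul hinv
  rw [pder, hee.fderiv_eq]
  have hfe := htot.fderiv
  simp only [Function.comp_def] at hfe
  erw [hfe]
  simp only [ContinuousLinearMap.add_apply, ContinuousLinearMap.smul_apply,
    ContinuousLinearMap.sum_apply, smul_eq_mul, mul_assoc, Finset.sum_add_distrib]
  rw [← Finset.mul_sum]
  have hsq : Real.sqrt (∑ c, f c x ^ 2) ^ 2 = ∑ c, f c x ^ 2 := Real.sq_sqrt hx.le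
  change _ * (_ * (_ * (2 * ∑ c, f c x * pder i (f c) x)))
    + _ * (∑ c, f c x * pder i (fun z => pder i (f c) z) x
      + ∑ c, pder i (f c) x * pder i (f c) x) = _
  simp only [← sq]
  set s := Real.sqrt (∑ c, f c x ^ 2)
  rw [← hsq]
  field_simp
  ring

end KatoHelpers

/-- Pointwise Kato inequality for the Frobenius norm: if `u : ℝⁿ → Matₙ(ℝ)ⁿ` is `C²` and
`u(x) ≠ 0`, then `y ↦ ‖u(y)‖_F` is twice continuously differentiable near `x` and at `x`
satisfies `Δ‖u‖_F ≥ ⟨u, Δu⟩_F/‖u‖_F + (1/n)·Σ_{i,j}‖[∂_i u_j, u_j]‖_F²/‖u‖_F³`. -/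
theorem pointwise_kato_inequality (n : ℕ) (u : En n → Fin n → Mat n)
    (hu : ContDiff ℝ 2 u) (x : En n) (hx : u x ≠ 0) :
    (∃ ε > 0, ContDiffOn ℝ 2 (fun z => Real.sqrt (tnormSq (u z))) (Metric.ball x ε)) ∧
    lapS (fun z => Real.sqrt (tnormSq (u z))) x ≥
      (∑ j, fipE (u x j) (lapM (fun z => u z j) x)) / Real.sqrt (tnormSq (u x))
      + (n : ℝ)⁻¹ *
          (∑ i, ∑ j, fipE (brkt (pderM i (fun z => u z j) x) (u x j))
            (brkt (pderM i (fun z => u z j) x) (u x j)))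
          / Real.sqrt (tnormSq (u x)) ^ 3 := by
  have hn : 0 < n := by
    rcases Nat.eq_zero_or_pos n with rfl | h
    · exact absurd (Subsingleton.elim _ _) hx
    · exact h
  set f : Fin n × Fin n × Fin n → En n → ℝ := fun c z => u z c.1 c.2.1 c.2.2 with hfdef
  have hf : ∀ c, ContDiff ℝ 2 (f c) := by
    intro c
    have h1 := contDiff_pi.1 hu c.1
    have h2 := contDiff_pi.1 h1 c.2.1
    exact contDiff_pi.1 h2 c.2.2
  have hS : ∀ z, tnormSq (u z) = ∑ c, f c z ^ 2 := by
    intro z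
    simp only [tnormSq, fipE, Fintype.sum_prod_type, hfdef, sq]
  simp only [hS]
  have hpos : 0 < ∑ c, f c x ^ 2 := by
    have h0 : 0 ≤ ∑ c, f c x ^ 2 := Finset.sum_nonneg fun c _ => sq_nonneg _
    refine lt_of_le_of_ne h0 fun h => hx ?_
    have := (Finset.sum_eq_zero_iff_of_nonneg (fun c _ => sq_nonneg (f c x))).1 h.symm
    funext j p q
    exact pow_eq_zero_iff (two_ne_zero) |>.1 (this (j, p, q) (Finset.mem_univ _))
  have hSC : ContDiff ℝ 2 fun z => ∑ c, f c z ^ 2 :=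
    ContDiff.sum fun c _ => (hf c).pow 2
  constructor
  · have hopen : IsOpen {z | 0 < ∑ c, f c z ^ 2} := isOpen_lt continuous_const hSC.continuous
    obtain ⟨ε, hε, hb⟩ := Metric.isOpen_iff.1 hopen x hpos
    exact ⟨ε, hε, hSC.contDiffOn.sqrt fun z hz => (hb hz).ne'⟩
  · have hL : lapS (fun z => Real.sqrt (∑ c, f c z ^ 2)) x = _ :=
      Finset.sum_congr rfl fun i _ => kato_calculus f hf x hpos i
    rw [hL, Finset.sum_add_distrib, ← Finset.sum_div, ← Finset.sum_div]
    have hlin : ∑ j, fipE (u x j) (lapM (fun z => u z j) x)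
        = ∑ i, ∑ c, f c x * pder i (fun z => pder i (f c) z) x := by
      rw [Finset.sum_comm]
      simp only [fipE, lapM, lapS, Fintype.sum_prod_type, hfdef, Finset.mul_sum]
    rw [hlin]
    have hs := Real.sqrt_pos.2 hpos
    refine add_le_add le_rfl ?_
    refine div_le_div_of_nonneg_right ?_ (by positivity)
    rw [Finset.mul_sum]
    refine Finset.sum_le_sum fun i _ => ?_
    exact kato_algebra n hn (u x) (fun j => pderM i (fun z => u z j) x)
end

section
/- There exists a constant C = C(n) such that the curvature of the Yang–Mills soliton connection W satisfies ‖F_{ij}(y)‖_F ≤ C/(1 + |y|²) for all y ∈ ℝⁿ and all indices i, j. -/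
open scoped BigOperators

lemma bC_pos_aux (n : ℕ) (hn : 5 ≤ n) (hn' : n ≤ 9) : 0 < bC n := by
  unfold bC
  have h5 : (5:ℝ) ≤ n := by exact_mod_cast hn
  have h9 : (n:ℝ) ≤ 9 := by exact_mod_cast hn'
  have key : Real.sqrt (2 * (n : ℝ) - 4) < 6 * ((n:ℝ) - 2) / (n + 2) := by
    rw [Real.sqrt_lt' (by apply div_pos <;> linarith), div_pow, lt_div_iff₀ (by positivity)]
    have : 0 < 18 * ((n:ℝ) - 2) - (n + 2)^2 := by nlinarith
    nlinarith [mul_pos (show (0:ℝ) < 2 * (n - 2) by linarith) this]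
  rw [lt_div_iff₀ (by positivity)] at key
  linarith

lemma aC_pos_aux (n : ℕ) (hn : 5 ≤ n) : 0 < aC n := by
  unfold aC
  have h5 : (5:ℝ) ≤ n := by exact_mod_cast hn
  have : 0 < Real.sqrt ((n : ℝ) - 2) := Real.sqrt_pos.2 (by linarith)
  positivity

/-- The entry of `σ_i` as a continuous linear functional. -/
noncomputable def sigL {n : ℕ} (i μ ν : Fin n) : En n →L[ℝ] ℝ :=
  (if i = ν then EuclideanSpace.proj μ else 0) - (if i = μ then EuclideanSpace.proj ν else 0)

lemma sigL_apply {n : ℕ} (i μ ν : Fin n) (y : En n) : sigL i μ ν y = sigmaM i y μ ν := by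
  unfold sigL sigmaM
  split_ifs <;> simp

lemma sigmaM_le {n : ℕ} (i μ ν : Fin n) (y : En n) : |sigmaM i y μ ν| ≤ 2 * ‖y‖ := by
  have h (k : Fin n) : |y k| ≤ ‖y‖ := PiLp.norm_apply_le y k
  have h0 := norm_nonneg y
  unfold sigmaM
  refine (abs_sub _ _).trans ?_
  split_ifs <;> simp <;> linarith [h μ, h ν]

lemma pder_Wc {n : ℕ} (i j μ ν : Fin n) (y : En n) (hD : aC n * ‖y‖ ^ 2 + bC n ≠ 0) :
    pderM i (Wc j) y μ ν =
      sigmaM j (EuclideanSpace.single i 1) μ ν / (aC n * ‖y‖ ^ 2 + bC n)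
      - sigmaM j y μ ν * (aC n * (2 * y i)) / (aC n * ‖y‖ ^ 2 + bC n) ^ 2 := by
  have h1 : HasFDerivAt (fun z : En n => sigL j μ ν z) (sigL j μ ν) y :=
    (sigL j μ ν).hasFDerivAt
  have h2 : HasFDerivAt (fun z : En n => aC n * ‖z‖ ^ 2 + bC n)
      (aC n • (2 • innerSL ℝ y)) y :=
    ((hasStrictFDerivAt_norm_sq y).hasFDerivAt.const_mul (aC n)).add_const _
  have h3 := h1.fun_mul ((hasDerivAt_inv hD).comp_hasFDerivAt y h2)
  have e : (fun z : En n => Wc j z μ ν)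
      = fun z => sigL j μ ν z * (aC n * ‖z‖ ^ 2 + bC n)⁻¹ := by
    funext z
    rw [sigL_apply, ← div_eq_mul_inv]; rfl
  simp only [Function.comp_def] at h3
  unfold pderM pder
  rw [e, h3.fderiv]
  simp [sigL_apply, EuclideanSpace.inner_single_right]
  field_simp
  ring

/-- There is a constant `C = C(n)` such that the curvature of the Yang–Mills soliton
connection `W` satisfies `‖F_{ij}(y)‖_F ≤ C/(1 + |y|²)` for all `y` and all `i, j`. -/
theorem curvature_decay (n : ℕ) (hn : 5 ≤ n) (hn' : n ≤ 9) :
    ∃ C : ℝ, ∀ (y : En n) (i j : Fin n), fnormE (Fc i j y) ≤ C / (1 + ‖y‖ ^ 2) := by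
  have ha := aC_pos_aux n hn
  have hb := bC_pos_aux n hn hn'
  obtain ⟨c, hc, hca, hcb⟩ : ∃ c : ℝ, 0 < c ∧ c ≤ aC n ∧ c ≤ bC n :=
    ⟨min (aC n) (bC n), lt_min ha hb, min_le_left _ _, min_le_right _ _⟩
  set K : ℝ := 2 * (2 / c + 4 * aC n / c ^ 2) + n * (8 / c ^ 2) with hK
  refine ⟨n * K, fun y i j => ?_⟩
  set N : ℝ := 1 + ‖y‖ ^ 2 with hN
  have hN1 : 0 < N := by positivity
  have hDN : c * N ≤ aC n * ‖y‖ ^ 2 + bC n := by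
    rw [hN]; nlinarith [mul_le_mul_of_nonneg_right hca (sq_nonneg ‖y‖)]
  have hcN : 0 < c * N := by positivity
  have hD : 0 < aC n * ‖y‖ ^ 2 + bC n := hcN.trans_le hDN
  have hyN : ‖y‖ ^ 2 ≤ N := by rw [hN]; linarith
  have hy0 := norm_nonneg y
  have hd (i j μ ν : Fin n) : |pderM i (Wc j) y μ ν| ≤ (2 / c + 4 * aC n / c ^ 2) / N := by
    rw [pder_Wc i j μ ν y hD.ne']
    have t1 := sigmaM_le j μ ν (EuclideanSpace.single i (1:ℝ))
    have t2 := sigmaM_le j μ ν y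
    have t3 : |y i| ≤ ‖y‖ := PiLp.norm_apply_le y i
    have s1 : |sigmaM j (EuclideanSpace.single i 1) μ ν / (aC n * ‖y‖ ^ 2 + bC n)|
        ≤ 2 / (c * N) := by
      rw [abs_div, abs_of_pos hD]
      gcongr
      simpa using t1
    have s2 : |sigmaM j y μ ν * (aC n * (2 * y i)) / (aC n * ‖y‖ ^ 2 + bC n) ^ 2|
        ≤ (4 * aC n * N) / (c * N) ^ 2 := by
      rw [abs_div, abs_of_pos (pow_pos hD 2)]
      gcongr
      rw [abs_mul, abs_mul, abs_mul, abs_of_pos ha, abs_two]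
      calc _ ≤ (2 * ‖y‖) * (aC n * (2 * ‖y‖)) := by gcongr
        _ = 4 * aC n * ‖y‖ ^ 2 := by ring
        _ ≤ _ := by gcongr
    calc _ ≤ _ := abs_sub _ _
      _ ≤ _ := add_le_add s1 s2
      _ = _ := by field_simp
  have hW (i μ ν : Fin n) : |Wc i y μ ν| ≤ 2 * ‖y‖ / (c * N) := by
    have t2 := sigmaM_le i μ ν y
    unfold Wc
    rw [abs_div, abs_of_pos hD]
    gcongr
  have hp (i j k l μ ν : Fin n) : |Wc i y μ ν * Wc j y k l| ≤ 4 / c ^ 2 / N := by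
    rw [abs_mul]
    calc _ ≤ (2 * ‖y‖ / (c * N)) * (2 * ‖y‖ / (c * N)) := by
          gcongr
          · exact hW _ _ _
          · exact hW _ _ _
      _ = 4 * ‖y‖ ^ 2 / (c * N) ^ 2 := by ring
      _ ≤ 4 * N / (c * N) ^ 2 := by gcongr
      _ = _ := by field_simp
  have hbr (μ ν : Fin n) : |brkt (Wc i y) (Wc j y) μ ν| ≤ n * (8 / c ^ 2) / N := by
    unfold brkt
    calc _ ≤ _ := Finset.abs_sum_le_sum_abs _ _
      _ ≤ ∑ k : Fin n, (8 / c ^ 2 / N) := by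
          refine Finset.sum_le_sum fun k _ => (abs_sub _ _).trans ?_
          calc _ ≤ _ := add_le_add (hp _ _ _ _ _ _) (hp _ _ _ _ _ _)
            _ = _ := by ring
      _ = _ := by simp; ring
  have hF (μ ν : Fin n) : |Fc i j y μ ν| ≤ K / N := by
    have : Fc i j y μ ν = pderM i (Wc j) y μ ν - pderM j (Wc i) y μ ν
      + brkt (Wc i y) (Wc j y) μ ν := rfl
    rw [this]
    calc _ ≤ _ := abs_add_le _ _
      _ ≤ _ := add_le_add ((abs_sub _ _).trans (add_le_add (hd _ _ _ _) (hd _ _ _ _))) (hbr _ _)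
      _ = _ := by rw [hK]; ring
  have hK0 : 0 ≤ K := by positivity
  unfold fnormE
  apply Real.sqrt_le_iff.2 ⟨by positivity, ?_⟩
  unfold fipE
  calc _ ≤ ∑ μ : Fin n, ∑ ν : Fin n, (K / N) ^ 2 := by
        refine Finset.sum_le_sum fun μ _ => Finset.sum_le_sum fun ν _ => ?_
        rw [← pow_two, ← sq_abs]
        gcongr
        exact hF μ ν
    _ = _ := by simp; ring
end

section
/- The tuple g = (g_1,…,g_n) defined by g_j(y) = σ_j(y)/(a|y|² + b)² satisfies L(g) = g pointwise on ℝⁿ; that is, g is an eigenfunction of −L with eigenvalue −1 (corresponding to the time translation of the soliton W). -/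
open scoped BigOperators

/-- The tuple `g` defined by `g_j(y) = σ_j(y)/(a|y|² + b)²`. -/
noncomputable def gTime (n : ℕ) : En n → Fin n → Mat n :=
  fun y j μ ν => sigmaM j y μ ν / (aC n * ‖y‖ ^ 2 + bC n) ^ 2


section helpers

/-- `f` is differentiable at `y` with `i`-th partial derivative `d`. -/
def HasPD {n : ℕ} (i : Fin n) (f : En n → ℝ) (y : En n) (d : ℝ) : Prop :=
  DifferentiableAt ℝ f y ∧ pder i f y = d

theorem HasPD.mul {n : ℕ} {i : Fin n} {f g : En n → ℝ} {y : En n} {d e : ℝ}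
    (hf : HasPD i f y d) (hg : HasPD i g y e) :
    HasPD i (fun z => f z * g z) y (d * g y + f y * e) := by
  refine ⟨hf.1.mul hg.1, ?_⟩
  rw [← hf.2, ← hg.2]
  unfold pder
  rw [fderiv_fun_mul hf.1 hg.1]
  simp
  ring

theorem HasPD.add {n : ℕ} {i : Fin n} {f g : En n → ℝ} {y : En n} {d e : ℝ}
    (hf : HasPD i f y d) (hg : HasPD i g y e) :
    HasPD i (fun z => f z + g z) y (d + e) := by
  refine ⟨hf.1.add hg.1, ?_⟩
  rw [← hf.2, ← hg.2]
  unfold pder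
  rw [fderiv_fun_add hf.1 hg.1]
  simp

theorem HasPD.const {n : ℕ} (i : Fin n) (c : ℝ) (y : En n) : HasPD i (fun _ => c) y 0 := by
  refine ⟨by fun_prop, ?_⟩
  unfold pder
  simp

theorem HasPD.coord {n : ℕ} (i k : Fin n) (y : En n) :
    HasPD i (fun z => z k) y (if i = k then 1 else 0) := by
  have h : HasFDerivAt (fun z : En n => z k)
      (EuclideanSpace.proj k : En n →L[ℝ] ℝ) y :=
    (EuclideanSpace.proj k : En n →L[ℝ] ℝ).hasFDerivAt
  refine ⟨h.differentiableAt, ?_⟩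
  unfold pder
  rw [h.fderiv]
  simp [eq_comm]

theorem HasPD.normSq {n : ℕ} (i : Fin n) (y : En n) :
    HasPD i (fun z => ‖z‖ ^ 2) y (2 * y i) := by
  have h := (hasStrictFDerivAt_norm_sq y).hasFDerivAt
  refine ⟨h.differentiableAt, ?_⟩
  unfold pder
  rw [h.fderiv]
  simp [EuclideanSpace.inner_single_right]

theorem HasPD.inv {n : ℕ} {i : Fin n} {f : En n → ℝ} {y : En n} {d : ℝ}
    (hf : HasPD i f y d) (h0 : f y ≠ 0) :
    HasPD i (fun z => (f z)⁻¹) y (- d * (f y)⁻¹ ^ 2) := by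
  have h := (hasDerivAt_inv h0).comp_hasFDerivAt y hf.1.hasFDerivAt
  have h' : HasFDerivAt (fun z => (f z)⁻¹) (-(f y ^ 2)⁻¹ • fderiv ℝ f y) y := h
  refine ⟨h'.differentiableAt, ?_⟩
  rw [← hf.2]
  unfold pder
  rw [h'.fderiv]
  simp
  ring

theorem HasPD.congr_d {n : ℕ} {i : Fin n} {f : En n → ℝ} {y : En n} {d e : ℝ}
    (hf : HasPD i f y d) (h : d = e) : HasPD i f y e := h ▸ hf

/-- the constant matrix `∂_i σ_j`. -/
def Emat {n : ℕ} (i j : Fin n) : Mat n :=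
  fun μ ν => (if j = ν then (if i = μ then 1 else 0) else 0)
    - (if j = μ then (if i = ν then 1 else 0) else 0)

/-- the reciprocal denominator. -/
noncomputable def Pf {n : ℕ} (y : En n) : ℝ := (aC n * ‖y‖ ^ 2 + bC n)⁻¹

theorem HasPD.sigma {n : ℕ} (i j μ ν : Fin n) (y : En n) :
    HasPD i (fun z => sigmaM j z μ ν) y (Emat i j μ ν) := by
  have h1 := (HasPD.coord i μ y).mul (HasPD.const i (if j = ν then (1:ℝ) else 0) y)
  have h2 := (HasPD.coord i ν y).mul (HasPD.const i (if j = μ then (-1:ℝ) else 0) y)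
  have h := (h1.add h2)
  have e : (fun z : En n => sigmaM j z μ ν) = fun z => z μ * (if j = ν then (1:ℝ) else 0)
      + z ν * (if j = μ then (-1:ℝ) else 0) := by
    funext z
    unfold sigmaM
    split_ifs <;> ring
  rw [e]
  refine h.congr_d ?_
  unfold Emat
  split_ifs <;> norm_num

theorem aC_sq {n : ℕ} (hn : 5 ≤ n) : aC n ^ 2 = ((n:ℝ) - 2) / 8 := by
  have h : (5:ℝ) ≤ n := by exact_mod_cast hn
  unfold aC
  rw [div_pow, mul_pow, Real.sq_sqrt (by linarith), Real.sq_sqrt (by norm_num)]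
  norm_num

theorem aC_pos {n : ℕ} (hn : 5 ≤ n) : 0 < aC n := by
  have h : (5:ℝ) ≤ n := by exact_mod_cast hn
  unfold aC
  have : 0 < (n:ℝ) - 2 := by linarith
  positivity

theorem bC_eq {n : ℕ} (hn : 5 ≤ n) : bC n = 3 * ((n:ℝ) - 2) - 2 * aC n * (n + 2) := by
  have h : (5:ℝ) ≤ n := by exact_mod_cast hn
  have hs : Real.sqrt (2 * (n:ℝ) - 4) = 4 * aC n := by
    rw [Real.sqrt_eq_iff_mul_self_eq (by linarith) (by linarith [aC_pos hn])]
    nlinarith [aC_sq hn]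
  unfold bC
  rw [hs]
  ring

theorem bC_pos {n : ℕ} (hn : 5 ≤ n) (hn' : n ≤ 9) : 0 < bC n := by
  have h : (5:ℝ) ≤ n := by exact_mod_cast hn
  have h' : (n:ℝ) ≤ 9 := by exact_mod_cast hn'
  rw [bC_eq hn]
  have ha := aC_pos hn
  have h2 := aC_sq hn
  have : 2 * aC n * (n + 2) < 3 * ((n:ℝ) - 2) := by
    apply lt_of_pow_lt_pow_left₀ 2 (by linarith)
    rw [mul_pow, mul_pow, h2]
    have : 0 < ((n:ℝ) - 2) * ((n - 4) * (10 - n)) :=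
      mul_pos (by linarith) (mul_pos (by linarith) (by linarith))
    nlinarith
  linarith

theorem den_pos {n : ℕ} (hn : 5 ≤ n) (hn' : n ≤ 9) (y : En n) :
    0 < aC n * ‖y‖ ^ 2 + bC n := by
  have := aC_pos hn
  have := bC_pos hn hn'
  positivity

theorem HasPD.P {n : ℕ} (hn : 5 ≤ n) (hn' : n ≤ 9) (i : Fin n) (y : En n) :
    HasPD i Pf y (-(2 * aC n * y i) * Pf y ^ 2) := by
  have h := (((HasPD.const i (aC n) y).mul (HasPD.normSq i y)).add
    (HasPD.const i (bC n) y)).inv (den_pos hn hn' y).ne'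
  refine HasPD.congr_d (f := Pf) h ?_
  simp only [Pf]
  ring

theorem brkt_add_right {n : ℕ} (A B C : Mat n) : brkt A (B + C) = brkt A B + brkt A C := by
  funext μ ν
  simp only [brkt, Pi.add_apply, ← Finset.sum_add_distrib]
  exact Finset.sum_congr rfl fun k _ => by ring

theorem brkt_sub_right {n : ℕ} (A B C : Mat n) : brkt A (B - C) = brkt A B - brkt A C := by
  funext μ ν
  simp only [brkt, Pi.sub_apply, ← Finset.sum_sub_distrib]
  exact Finset.sum_congr rfl fun k _ => by ring

theorem brkt_smul_right {n : ℕ} (c : ℝ) (A B : Mat n) : brkt A (c • B) = c • brkt A B := by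
  funext μ ν
  simp only [brkt, Pi.smul_apply, smul_eq_mul, Finset.mul_sum]
  exact Finset.sum_congr rfl fun k _ => by ring

theorem brkt_smul_left {n : ℕ} (c : ℝ) (A B : Mat n) : brkt (c • A) B = c • brkt A B := by
  funext μ ν
  simp only [brkt, Pi.smul_apply, smul_eq_mul, Finset.mul_sum]
  exact Finset.sum_congr rfl fun k _ => by ring

theorem brkt_self {n : ℕ} (A : Mat n) : brkt A A = 0 := by
  funext μ ν
  simp [brkt]

theorem sum_y_sigma {n : ℕ} (y : En n) : ∑ i, y i • sigmaM i y = 0 := by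
  funext μ ν
  simp only [Finset.sum_apply, sigmaM, Pi.smul_apply, smul_eq_mul, mul_sub,
    Finset.sum_sub_distrib, mul_ite, mul_zero, Pi.zero_apply]
  simp
  ring

theorem sum_y_E {n : ℕ} (y : En n) (j : Fin n) : ∑ i, y i • Emat i j = sigmaM j y := by
  funext μ ν
  simp [Finset.sum_apply, sigmaM, Emat, mul_sub, Finset.sum_sub_distrib]

theorem sum_sq {n : ℕ} (y : En n) : ∑ k, y k * y k = ‖y‖ ^ 2 := by
  rw [EuclideanSpace.real_norm_sq_eq]
  exact Finset.sum_congr rfl fun k _ => by ring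

theorem brkt_sigma_sigma {n : ℕ} (y : En n) (i j : Fin n) :
    brkt (sigmaM i y) (sigmaM j y)
      = y i • sigmaM j y - (‖y‖ ^ 2) • Emat i j - y j • sigmaM i y := by
  funext μ ν
  simp only [brkt, sigmaM, Emat, Pi.sub_apply, Pi.smul_apply, smul_eq_mul, ← sum_sq]
  simp only [sub_mul, mul_sub, Finset.sum_sub_distrib, ite_mul, mul_ite, zero_mul, mul_zero]
  by_cases h1 : i = ν <;> by_cases h2 : i = μ <;> by_cases h3 : j = ν <;> by_cases h4 : j = μ <;>
    simp [h1, h2, h3, h4] <;> grind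

theorem brkt_sigma_E {n : ℕ} (y : En n) (i j μ ν : Fin n) :
    brkt (sigmaM i y) (Emat i j) μ ν =
      sigmaM j y μ ν - (if i = j then sigmaM i y μ ν else 0)
      - y i * Emat i j μ ν := by
  simp only [brkt, sigmaM, Emat]
  simp only [sub_mul, mul_sub, Finset.sum_sub_distrib, ite_mul, mul_ite, zero_mul, mul_zero]
  by_cases h1 : i = ν <;> by_cases h2 : i = μ <;> by_cases h3 : j = ν <;> by_cases h4 : j = μ <;>
    simp [h1, h2, h3, h4] <;> grind

theorem sum_brkt_sigma_E {n : ℕ} (y : En n) (j : Fin n) :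
    ∑ i, brkt (sigmaM i y) (Emat i j) = ((n:ℝ) - 2) • sigmaM j y := by
  funext μ ν
  have h := congrFun (congrFun (sum_y_E y j) μ) ν
  simp only [Finset.sum_apply, Pi.smul_apply, smul_eq_mul] at h
  simp only [Finset.sum_apply, brkt_sigma_E, Finset.sum_sub_distrib, h, Pi.smul_apply,
    smul_eq_mul]
  simp
  ring

theorem sum_brkt_y {n : ℕ} (y : En n) (B : Mat n) :
    ∑ i, y i • brkt (sigmaM i y) B = 0 := by
  have h := sum_y_sigma y
  have h2 : ∑ i, y i • brkt (sigmaM i y) B = brkt (∑ i, y i • sigmaM i y) B := by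
    funext μ ν
    simp only [brkt, Finset.sum_apply, Pi.smul_apply, smul_eq_mul, Finset.mul_sum,
      Finset.sum_mul]
    rw [Finset.sum_comm]
    refine Finset.sum_congr rfl fun k _ => ?_
    rw [← Finset.sum_sub_distrib]
    exact Finset.sum_congr rfl fun i _ => by ring
  rw [h2, h]
  funext μ ν
  simp [brkt]

theorem sum_brkt_brkt {n : ℕ} (y : En n) (j : Fin n) :
    ∑ i, brkt (sigmaM i y) (brkt (sigmaM i y) (sigmaM j y))
      = (-(((n:ℝ) - 2) * ‖y‖ ^ 2)) • sigmaM j y := by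
  simp only [brkt_sigma_sigma y _ j]
  simp only [brkt_sub_right, brkt_smul_right, brkt_self, smul_zero, sub_zero]
  rw [Finset.sum_sub_distrib, sum_brkt_y, ← Finset.smul_sum, sum_brkt_sigma_E]
  module

theorem Wc_eq {n : ℕ} (i : Fin n) (y : En n) : Wc i y = Pf y • sigmaM i y := by
  funext μ ν
  simp only [Wc, Pf, Pi.smul_apply, smul_eq_mul]
  ring

theorem gTime_eq {n : ℕ} (y : En n) (j : Fin n) : gTime n y j = Pf y ^ 2 • sigmaM j y := by
  funext μ ν
  simp only [gTime, Pf, Pi.smul_apply, smul_eq_mul]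
  rw [inv_pow, div_eq_mul_inv, mul_comm]

theorem pderM_W {n : ℕ} (hn : 5 ≤ n) (hn' : n ≤ 9) (i j : Fin n) (y : En n) :
    pderM i (Wc j) y = Pf y • Emat i j - (2 * aC n * Pf y ^ 2) • (y i • sigmaM j y) := by
  funext μ ν
  simp only [pderM, Wc_eq, Pi.sub_apply, Pi.smul_apply, smul_eq_mul]
  rw [((HasPD.P hn hn' i y).mul (HasPD.sigma i j μ ν y)).2]
  ring

theorem HasPD.P2 {n : ℕ} (hn : 5 ≤ n) (hn' : n ≤ 9) (i : Fin n) (y : En n) :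
    HasPD i (fun z => Pf z ^ 2) y (-(4 * aC n * y i) * Pf y ^ 3) := by
  have h := (HasPD.P hn hn' i y).mul (HasPD.P hn hn' i y)
  have e : (fun z : En n => Pf z ^ 2) = fun z => Pf z * Pf z := by funext z; ring
  rw [e]
  exact h.congr_d (by ring)

theorem HasPD.P3 {n : ℕ} (hn : 5 ≤ n) (hn' : n ≤ 9) (i : Fin n) (y : En n) :
    HasPD i (fun z => Pf z ^ 3) y (-(6 * aC n * y i) * Pf y ^ 4) := by
  have h := (HasPD.P2 hn hn' i y).mul (HasPD.P hn hn' i y)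
  have e : (fun z : En n => Pf z ^ 3) = fun z => Pf z ^ 2 * Pf z := by funext z; ring
  rw [e]
  exact h.congr_d (by ring)

theorem pder_g {n : ℕ} (hn : 5 ≤ n) (hn' : n ≤ 9) (i j μ ν : Fin n) (y : En n) :
    pder i (fun z => gTime n z j μ ν) y
      = Pf y ^ 2 * Emat i j μ ν + -(4 * aC n) * (Pf y ^ 3 * (y i * sigmaM j y μ ν)) := by
  simp only [gTime_eq, Pi.smul_apply, smul_eq_mul]
  rw [((HasPD.P2 hn hn' i y).mul (HasPD.sigma i j μ ν y)).2]
  ring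

theorem pderM_g {n : ℕ} (hn : 5 ≤ n) (hn' : n ≤ 9) (i j : Fin n) (y : En n) :
    pderM i (fun z => gTime n z j) y
      = Pf y ^ 2 • Emat i j - (4 * aC n * Pf y ^ 3) • (y i • sigmaM j y) := by
  funext μ ν
  simp only [pderM, pder_g hn hn', Pi.sub_apply, Pi.smul_apply, smul_eq_mul]
  ring

theorem lapM_g {n : ℕ} (hn : 5 ≤ n) (hn' : n ≤ 9) (j : Fin n) (y : En n) :
    lapM (fun z => gTime n z j) y
      = (-(8 * aC n + 4 * aC n * n) * Pf y ^ 3 + 24 * aC n ^ 2 * ‖y‖ ^ 2 * Pf y ^ 4)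
        • sigmaM j y := by
  funext μ ν
  have hE := congrFun (congrFun (sum_y_E y j) μ) ν
  simp only [Finset.sum_apply, Pi.smul_apply, smul_eq_mul] at hE
  simp only [lapM, lapS, pder_g hn hn', Pi.smul_apply, smul_eq_mul]
  have h : ∀ i, pder i (fun z => Pf z ^ 2 * Emat i j μ ν
      + -(4 * aC n) * (Pf z ^ 3 * (z i * sigmaM j z μ ν))) y
      = -(8 * aC n * Pf y ^ 3) * (y i * Emat i j μ ν)
        + 24 * aC n ^ 2 * Pf y ^ 4 * sigmaM j y μ ν * (y i * y i)
        + -(4 * aC n) * Pf y ^ 3 * sigmaM j y μ ν := by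
    intro i
    rw [(((HasPD.P2 hn hn' i y).mul (HasPD.const i (Emat i j μ ν) y)).add
      ((HasPD.const i (-(4 * aC n)) y).mul ((HasPD.P3 hn hn' i y).mul
        ((HasPD.coord i i y).mul (HasPD.sigma i j μ ν y))))).2]
    simp only [if_true]
    ring
  simp only [h, Finset.sum_add_distrib, ← Finset.mul_sum, hE, sum_sq]
  simp
  ring

theorem final_scalar {n : ℕ} (hn : 5 ≤ n) (hn' : n ≤ 9) (y : En n) :
    (-(8 * aC n + 4 * aC n * n) * Pf y ^ 3 + 24 * aC n ^ 2 * ‖y‖ ^ 2 * Pf y ^ 4)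
      - 1 / 2 * (Pf y ^ 2 - 4 * aC n * Pf y ^ 3 * ‖y‖ ^ 2) - 1 / 2 * Pf y ^ 2
      + 2 * (Pf y ^ 3 * (n - 2)) - Pf y ^ 4 * ((n - 2) * ‖y‖ ^ 2)
      + 2 * (2 * (Pf y ^ 3 * (n - 2)) - Pf y ^ 4 * ((n - 2) * ‖y‖ ^ 2)) = Pf y ^ 2 := by
  have hP : Pf y * (aC n * ‖y‖ ^ 2 + bC n) = 1 := inv_mul_cancel₀ (den_pos hn hn' y).ne'
  rw [bC_eq hn] at hP
  have ha : (n:ℝ) - 2 = 8 * aC n ^ 2 := by rw [aC_sq hn]; ring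
  have hn2 : (n:ℝ) = 8 * aC n ^ 2 + 2 := by linarith
  rw [hn2] at hP ⊢
  linear_combination (2 * Pf y ^ 2) * hP

end helpers

/-- The tuple `g_j(y) = σ_j(y)/(a|y|² + b)²` satisfies `L(g) = g` pointwise; i.e. `g` is an
eigenfunction of `−L` with eigenvalue `−1`, corresponding to time translation of the soliton. -/
theorem time_translation_eigenfunction (n : ℕ) (hn : 5 ≤ n) (hn' : n ≤ 9)
    (y : En n) (j : Fin n) :
    Lop (gTime n) y j = gTime n y j := by
  have hF : ∀ i, Fc i j y = (2 * Pf y) • Emat i j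
      - (2 * aC n * Pf y ^ 2) • (y i • sigmaM j y - y j • sigmaM i y)
      + Pf y ^ 2 • brkt (sigmaM i y) (sigmaM j y) := by
    intro i
    have hE : Emat j i = - Emat i j := by
      funext μ ν
      simp only [Emat, Pi.neg_apply]
      split_ifs <;> simp
    unfold Fc
    rw [pderM_W hn hn', pderM_W hn hn', Wc_eq, Wc_eq, brkt_smul_left, brkt_smul_right, hE]
    module
  have hR : ∑ i, y i • (y i • sigmaM j y) = (‖y‖ ^ 2) • sigmaM j y := by
    rw [← sum_sq, Finset.sum_smul]
    exact Finset.sum_congr rfl fun i _ => by rw [smul_smul]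
  have hD : ∑ i, y i • pderM i (fun z => gTime n z j) y
      = (Pf y ^ 2 - 4 * aC n * Pf y ^ 3 * ‖y‖ ^ 2) • sigmaM j y := by
    simp only [pderM_g hn hn', smul_sub, Finset.sum_sub_distrib]
    simp only [smul_comm (y _) (Pf y ^ 2), smul_comm (y _) (4 * aC n * Pf y ^ 3),
      ← Finset.smul_sum, sum_y_E, hR]
    module
  have h4 : ∑ i, brkt (Wc i y) (pderM i (fun z => gTime n z j) y)
      = (Pf y ^ 3 * (n - 2)) • sigmaM j y := by
    simp only [pderM_g hn hn', Wc_eq, brkt_smul_left, brkt_sub_right, brkt_smul_right,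
      smul_comm (y _) (Pf y), Finset.sum_sub_distrib, ← Finset.smul_sum, sum_brkt_y,
      sum_brkt_sigma_E]
    module
  have h5 : ∑ i, brkt (Wc i y) (brkt (Wc i y) (gTime n y j))
      = (-(Pf y ^ 4 * ((n - 2) * ‖y‖ ^ 2))) • sigmaM j y := by
    simp only [gTime_eq, Wc_eq, brkt_smul_left, brkt_smul_right, ← Finset.smul_sum,
      sum_brkt_brkt]
    module
  have h6 : ∑ i, brkt (gTime n y i) (Fc i j y)
      = (2 * (Pf y ^ 3 * (n - 2)) - Pf y ^ 4 * ((n - 2) * ‖y‖ ^ 2)) • sigmaM j y := by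
    simp only [hF, gTime_eq, brkt_smul_left, brkt_add_right, brkt_sub_right, brkt_smul_right,
      brkt_self, smul_zero, sub_zero, Finset.sum_add_distrib, smul_sub,
      smul_comm (y _) (Pf y ^ 2),
      Finset.sum_sub_distrib, ← Finset.smul_sum, sum_brkt_y, sum_brkt_sigma_E, sum_brkt_brkt]
    module
  unfold Lop
  rw [lapM_g hn hn', hD, h4, h5, h6, gTime_eq]
  conv_rhs => rw [← final_scalar hn hn' y]
  module
end
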